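/- arXiv:1304.1622 — 2 statements merged into one kernel-verified Lean document; each statement's English description precedes it below -/
import Mathlib

section
/- Let 1 < p < ∞ and β > 0, and let T be the bounded linear operator on L^p(ℝ, ℂ) induced by the generalized Cesàro operator 𝒞_β on the real line. Then the spectrum of T equals Γ(β+1) · closure{ Γ(1 − 1/p + it)/Γ(β + 1 − 1/p + it) : t ∈ ℝ }, where the closure is taken in ℂ. -/
/-!
For `y : ℝ` let `D_y f (x) = e^{-y/p} f(e^{-y} x)`. This is a strongly continuous one-parameter group
of isometries of `L^p(ℝ)`. The substitution `s = e^{-y} t` turns both branches of `𝒞_β` into the same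
average `T = ∫ k(y) D_y dy`, where `k` is supported on `(0, ∞)` and integrable (`cesaroKernel`,
`cesaro_eq_integral_dil`). A beta integral evaluates its Fourier transform:
`k̂(t) = ∫ k(y) e^{ity} dy = Γ(β+1) Γ(1-1/p-it) / Γ(β+1-1/p-it)` (`fourierVal_cesaroKernel`). The
claim is therefore that the spectrum of `T` is the closure of the range of `k̂`.

*The spectrum is contained in the closure.* The double commutant of `T` and the `D_y` is a
commutative Banach algebra in which the spectrum of `T` is at least as large, so by Gelfand theory
every spectral value of `T` is `φ(T)` for a character `φ` of it. The map `s ↦ T D_s` is norm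
continuous, since it is given by the translates of `k`, which move continuously in `L¹`. If
`φ(T) ≠ 0`, then `s ↦ φ(D_s) = φ(T D_s) / φ(T)` is a continuous unimodular character of `ℝ`, so it is
`s ↦ e^{its}` for some `t`, and applying `φ` to `T² = ∫ k(y) T D_y dy` yields `φ(T) = k̂(t)`
(`spectrum_subset_fourierVal`). The value `0` lies in the closure by the Riemann–Lebesgue lemma.

*The closure is contained in the spectrum.* The normalised truncations of `x^{-1/p-it}` to
`(1, e^n]` are approximate eigenvectors of each `D_y`, `y ≥ 0`, with eigenvalue `e^{ity}`
(`exists_approx_eigenvectors`). By dominated convergence they are approximate eigenvectors of `T`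
with eigenvalue `k̂(t)` (`mem_spectrum_of_approx`), and the spectrum is closed.
-/

open MeasureTheory Set Pointwise

/-- The generalized Cesàro operator on the real line:
`𝒞_β f(t) = (β/|t|^β) ∫ₜ⁰ (s-t)^(β-1) f(s) ds` for `t < 0` and
`𝒞_β f(t) = (β/t^β) ∫₀ᵗ (t-s)^(β-1) f(s) ds` for `t > 0`. -/
noncomputable def cesaroR (β : ℝ) (f : ℝ → ℂ) (t : ℝ) : ℂ :=
  if 0 < t then
    ((β / t ^ β : ℝ) : ℂ) * ∫ s in Ioo (0 : ℝ) t, (((t - s) ^ (β - 1) : ℝ) : ℂ) * f s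
  else if t < 0 then
    ((β / |t| ^ β : ℝ) : ℂ) * ∫ s in Ioo t (0 : ℝ), (((s - t) ^ (β - 1) : ℝ) : ℂ) * f s
  else f 0

open Filter Topology WeakDual

/-! ### Characters of the real line and Gelfand theory -/

/-- A continuous unimodular character of `ℝ` is `s ↦ exp(its)`. -/
lemma exists_exp_of_character {χ : ℝ → ℂ} (hc : Continuous χ) (h0 : χ 0 = 1)
    (hadd : ∀ s t, χ (s + t) = χ s * χ t) (hn : ∀ s, ‖χ s‖ = 1) :
    ∃ t : ℝ, ∀ s, χ s = Complex.exp (Complex.I * (t * s)) := by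
  -- a primitive `G` of `χ` is nonzero at some `a`, and `χ x * G a = G (x + a) - G x` shows that `χ`
  -- is differentiable
  have hG : ∀ x, HasDerivAt (fun y => ∫ s in (0 : ℝ)..y, χ s) (χ x) x := fun x =>
    intervalIntegral.integral_hasDerivAt_right (hc.intervalIntegrable _ _)
      hc.stronglyMeasurable.stronglyMeasurableAtFilter hc.continuousAt
  set G : ℝ → ℂ := fun y => ∫ s in (0 : ℝ)..y, χ s with hGdef
  obtain ⟨a, ha⟩ : ∃ a, G a ≠ 0 := by
    by_contra! h
    have h1 : HasDerivAt G 0 0 := by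
      have : G = fun _ => 0 := funext h
      rw [this]; exact hasDerivAt_const _ _
    have := h1.unique (hG 0)
    rw [h0] at this
    exact zero_ne_one this
  have hshift : ∀ x, χ x * G a = G (x + a) - G x := by
    intro x
    have h1 : χ x * G a = ∫ s in (0 : ℝ)..a, χ (x + s) := by
      simp only [hadd, hGdef, intervalIntegral.integral_const_mul]
    rw [h1, intervalIntegral.integral_comp_add_left (fun s => χ s) x]
    simp only [hGdef, add_zero]
    rw [intervalIntegral.integral_interval_sub_left (hc.intervalIntegrable _ _)
      (hc.intervalIntegrable _ _)]
  have hd : ∀ x, HasDerivAt χ ((χ (x + a) - χ x) / G a) x := by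
    intro x
    have h1 : χ = fun x => (G (x + a) - G x) / G a := by
      funext x; rw [← hshift, mul_div_cancel_right₀ _ ha]
    have h2 : HasDerivAt (fun x => (G (x + a) - G x) / G a) ((χ (x + a) - χ x) / G a) x :=
      (((hG (x + a)).comp_add_const x a).sub (hG x)).div_const _
    rw [← h1] at h2
    exact h2
  set c : ℂ := (χ a - 1) / G a with hcdef
  have hd' : ∀ x, HasDerivAt χ (c * χ x) x := by
    intro x
    convert hd x using 1
    rw [hadd, hcdef]; ring
  have hexp : ∀ x : ℝ, χ x = Complex.exp (c * x) := by
    intro x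
    have hE : ∀ x : ℝ, HasDerivAt (fun x : ℝ => χ x * Complex.exp (-(c * x))) 0 x := by
      intro x
      have h1 : HasDerivAt (fun x : ℝ => Complex.exp (-(c * x)))
          (Complex.exp (-(c * x)) * (-(c * 1))) x :=
        ((((hasDerivAt_id x).ofReal_comp).const_mul c).neg).cexp
      have h2 := (hd' x).mul h1
      have h3 : c * χ x * Complex.exp (-(c * x)) +
          χ x * (Complex.exp (-(c * x)) * (-(c * 1))) = 0 := by ring
      exact h3 ▸ h2
    have hconst := is_const_of_deriv_eq_zero (fun x => (hE x).differentiableAt)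
      (fun x => (hE x).deriv) x 0
    simp only [h0, Complex.ofReal_zero, mul_zero, neg_zero, Complex.exp_zero, mul_one] at hconst
    rw [Complex.exp_neg] at hconst
    field_simp at hconst
    exact hconst
  -- the only place where unimodularity enters
  have hre : c.re = 0 := by
    have h1 := hn 1
    rw [hexp, Complex.norm_exp] at h1
    simpa using h1
  refine ⟨c.im, fun s => ?_⟩
  rw [hexp]
  congr 1
  apply Complex.ext <;> simp [hre]

/-- The Fourier transform `∫ k(y) e^{ity} dy`, with the sign and normalisation adapted to the
characters `s ↦ e^{its}`. -/
noncomputable def fourierVal (k : ℝ → ℂ) (t : ℝ) : ℂ :=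
  ∫ y, k y * Complex.exp (Complex.I * (t * y))

/-- In a commutative Banach algebra, a spectral value of `T` is `φ T` for a character `φ`. If it is
nonzero, then `s ↦ φ (D s) = φ (T * D s) / φ T` is a continuous unimodular character of `ℝ`, and
the formula for `T * T` identifies `φ T` with a value of the Fourier transform of `k`. -/
lemma spectrum_subset_of_comm {A : Type*} [NormedCommRing A] [NormedAlgebra ℂ A]
    [CompleteSpace A] [NormOneClass A] {k : ℝ → ℂ} {T : A} {D : ℝ → A}
    (hD0 : D 0 = 1) (hDadd : ∀ s t, D (s + t) = D s * D t) (hDn : ∀ s, ‖D s‖ ≤ 1)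
    (hc : Continuous fun s => T * D s) (hk : Integrable k)
    (hTT : T * T = ∫ y, k y • (T * D y)) {z : ℂ} (hz : z ∈ spectrum ℂ T) :
    z = 0 ∨ ∃ t, z = fourierVal k t := by
  obtain ⟨φ, rfl⟩ := WeakDual.CharacterSpace.mem_spectrum_iff_exists.1 hz
  by_cases h0 : φ T = 0
  · exact Or.inl h0
  right
  have hφn : ∀ a : A, ‖φ a‖ ≤ ‖a‖ := fun a => by
    have := spectrum.norm_le_norm_of_mem (WeakDual.CharacterSpace.apply_mem_spectrum φ a)
    exact this
  have hle : ∀ s, ‖φ (D s)‖ ≤ 1 := fun s => (hφn _).trans (hDn s)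
  have hadd : ∀ s t, φ (D (s + t)) = φ (D s) * φ (D t) := fun s t => by rw [hDadd, map_mul]
  have h1 : φ (D 0) = 1 := by rw [hD0, map_one]
  have hnorm : ∀ s, ‖φ (D s)‖ = 1 := by
    intro s
    refine le_antisymm (hle s) ?_
    have h2 : ‖φ (D s)‖ * ‖φ (D (-s))‖ = 1 := by
      rw [← norm_mul, ← hadd, add_neg_cancel, h1, norm_one]
    nlinarith [hle (-s), norm_nonneg (φ (D s)), norm_nonneg (φ (D (-s)))]
  have hφc : Continuous φ := map_continuous φ
  have hcont : Continuous fun s => φ (D s) := by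
    have h2 : (fun s => φ (D s)) = fun s => φ (T * D s) / φ T := by
      funext s; rw [map_mul, mul_div_cancel_left₀ _ h0]
    rw [h2]
    exact (hφc.comp hc).div_const _
  obtain ⟨t, ht⟩ := exists_exp_of_character hcont h1 hadd hnorm
  refine ⟨t, ?_⟩
  have hInt : Integrable fun y => k y • (T * D y) := by
    refine Integrable.smul_bdd hk ‖T‖ hc.aestronglyMeasurable (Eventually.of_forall fun y => ?_)
    exact (norm_mul_le _ _).trans (mul_le_of_le_one_right (norm_nonneg _) (hDn y))
  have h3 : φ T * φ T = φ T * fourierVal k t := by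
    rw [← map_mul, hTT]
    have h4 := (CharacterSpace.toCLM φ).integral_comp_comm hInt
    have h5 : φ (∫ y, k y • (T * D y)) = CharacterSpace.toCLM φ (∫ y, k y • (T * D y)) := rfl
    rw [h5, ← h4, fourierVal, ← integral_const_mul]
    refine integral_congr_ae (Eventually.of_forall fun y => ?_)
    change φ (k y • (T * D y)) = _
    rw [map_smul, map_mul, ht, smul_eq_mul]
    ring
  exact mul_left_cancel₀ h0 h3

/-- The same inclusion in a noncommutative Banach algebra, obtained by passing to the double
commutant of `T` and the `D s`, which is a closed commutative subalgebra. -/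
lemma spectrum_subset_of_commute {B : Type*} [NormedRing B] [NormedAlgebra ℂ B]
    [CompleteSpace B] [NormOneClass B] {k : ℝ → ℂ} {T : B} {D : ℝ → B}
    (hD0 : D 0 = 1) (hDadd : ∀ s t, D (s + t) = D s * D t) (hDn : ∀ s, ‖D s‖ ≤ 1)
    (hTD : ∀ s, T * D s = D s * T)
    (hc : Continuous fun s => T * D s) (hk : Integrable k)
    (hTT : T * T = ∫ y, k y • (T * D y)) {z : ℂ} (hz : z ∈ spectrum ℂ T) :
    z = 0 ∨ ∃ t, z = fourierVal k t := by
  set S : Set B := {T} ∪ range D with hS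
  have hScomm : ∀ a ∈ S, ∀ b ∈ S, a * b = b * a := by
    rintro a (rfl | ⟨s, rfl⟩) b (rfl | ⟨t, rfl⟩)
    · rfl
    · exact hTD t
    · exact (hTD s).symm
    · rw [← hDadd, add_comm, hDadd]
  set A : Subalgebra ℂ B := Subalgebra.centralizer ℂ (Subalgebra.centralizer ℂ S : Set B) with hA
  have hSA : S ⊆ A := Set.subset_centralizer_centralizer
  have hAcomm : ∀ a ∈ A, ∀ b ∈ A, a * b = b * a := by
    intro a ha b hb
    refine ((Subalgebra.mem_centralizer_iff ℂ).1 hb a ?_)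
    refine (Subalgebra.mem_centralizer_iff ℂ).2 fun s hs => ?_
    exact (Subalgebra.mem_centralizer_iff ℂ).1 ha s
      ((Subalgebra.mem_centralizer_iff ℂ).2 fun u hu => hScomm u hu s hs)
  have hAclosed : IsClosed (A : Set B) := Set.isClosed_centralizer _
  have : CompleteSpace A := hAclosed.completeSpace_coe
  let : NormedCommRing A :=
    { (inferInstance : NormedRing A) with
      mul_comm := fun a b => Subtype.ext (hAcomm a a.2 b b.2) }
  have : NormOneClass A := ⟨norm_one (α := B)⟩
  let T' : A := ⟨T, hSA (Or.inl rfl)⟩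
  let D' : ℝ → A := fun s => ⟨D s, hSA (Or.inr ⟨s, rfl⟩)⟩
  -- an inverse in the subalgebra is an inverse in `B`, so the spectrum can only grow
  have hz' : z ∈ spectrum ℂ T' := by
    intro hu
    apply hz
    have := hu.map A.val
    simpa using! this
  have hc' : Continuous fun s => T' * D' s := continuous_induced_rng.2 hc
  have : SecondCountableTopologyEither ℝ A := secondCountableTopologyEither_of_left ℝ A
  refine spectrum_subset_of_comm (T := T') (D := D') (Subtype.ext hD0)
    (fun s t => Subtype.ext (hDadd s t)) hDn hc' hk ?_ hz'
  have hInt : Integrable fun y => k y • (T' * D' y) := by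
    refine Integrable.smul_bdd hk ‖T'‖ hc'.aestronglyMeasurable
      (Eventually.of_forall fun y => ?_)
    exact (norm_mul_le _ _).trans (mul_le_of_le_one_right (norm_nonneg _) (hDn y))
  refine Subtype.ext ?_
  change T * T = _
  rw [hTT]
  exact (A.toSubmodule.subtypeL.integral_comp_comm hInt)

/-! ### The dilation group on `L^p(ℝ)` -/

/-- The normalised dilation `x ↦ e^{-y/p} f(e^{-y} x)` on functions. -/
noncomputable def dilFun (p y : ℝ) (f : ℝ → ℂ) (x : ℝ) : ℂ :=
  (Real.exp (-y / p) : ℂ) * f (Real.exp (-y) * x)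

lemma qmp_mul_exp (y : ℝ) :
    Measure.QuasiMeasurePreserving (fun x : ℝ => Real.exp (-y) * x) volume volume := by
  refine ⟨by fun_prop, ?_⟩
  rw [Real.map_volume_mul_left (Real.exp_pos _).ne']
  exact Measure.smul_absolutelyContinuous

lemma dilFun_congr {p y : ℝ} {f g : ℝ → ℂ} (h : f =ᵐ[volume] g) :
    dilFun p y f =ᵐ[volume] dilFun p y g := by
  filter_upwards [(qmp_mul_exp y).ae_eq h] with x hx
  have hx' : f (Real.exp (-y) * x) = g (Real.exp (-y) * x) := hx
  simp only [dilFun, hx']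

lemma aestronglyMeasurable_dilFun {p y : ℝ} {f : ℝ → ℂ} (hf : AEStronglyMeasurable f volume) :
    AEStronglyMeasurable (dilFun p y f) volume :=
  (hf.comp_quasiMeasurePreserving (qmp_mul_exp y)).const_mul _

/-- The normalisation makes dilations isometric. -/
lemma eLpNorm_dilFun {p : ℝ} (hp : 1 < p) (y : ℝ) {f : ℝ → ℂ}
    (hf : AEStronglyMeasurable f volume) :
    eLpNorm (dilFun p y f) (ENNReal.ofReal p) volume = eLpNorm f (ENNReal.ofReal p) volume := by
  have hp0 : 0 < p := by linarith
  have h1 : eLpNorm (fun x => f (Real.exp (-y) * x)) (ENNReal.ofReal p) volume =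
      ENNReal.ofReal (Real.exp (y / p)) * eLpNorm f (ENNReal.ofReal p) volume := by
    have hmap := Real.map_volume_mul_left (Real.exp_pos (-y)).ne'
    have hf' : AEStronglyMeasurable f (Measure.map (fun x => Real.exp (-y) * x) volume) := by
      rw [hmap]; exact hf.smul_measure _
    have h2 := eLpNorm_map_measure (p := ENNReal.ofReal p) hf'
      (f := fun x => Real.exp (-y) * x) (by fun_prop)
    rw [hmap, eLpNorm_smul_measure_of_ne_top ENNReal.ofReal_ne_top] at h2
    rw [show (fun x => f (Real.exp (-y) * x)) = f ∘ (fun x => Real.exp (-y) * x) from rfl, ← h2,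
      smul_eq_mul, ← Real.exp_neg, neg_neg, abs_of_pos (Real.exp_pos _),
      ENNReal.toReal_div, ENNReal.toReal_one, ENNReal.toReal_ofReal hp0.le,
      ENNReal.ofReal_rpow_of_pos (Real.exp_pos _), ← Real.exp_mul]
    congr 3
    ring
  have h3 : dilFun p y f = (Real.exp (-y / p) : ℂ) • fun x => f (Real.exp (-y) * x) := rfl
  have h4 : ‖(Real.exp (-y / p) : ℂ)‖ₑ = ENNReal.ofReal (Real.exp (-y / p)) := by
    rw [← ofReal_norm, Complex.norm_real, Real.norm_of_nonneg (Real.exp_pos _).le]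
  rw [h3, eLpNorm_const_smul, h1, h4, ← mul_assoc, ← ENNReal.ofReal_mul (Real.exp_pos _).le,
    ← Real.exp_add]
  simp [neg_div]

lemma memLp_dilFun {p : ℝ} (hp : 1 < p) (y : ℝ) {f : ℝ → ℂ}
    (hf : MemLp f (ENNReal.ofReal p) volume) :
    MemLp (dilFun p y f) (ENNReal.ofReal p) volume :=
  ⟨aestronglyMeasurable_dilFun hf.1, by rw [eLpNorm_dilFun hp y hf.1]; exact hf.2⟩

/-- The normalised dilation as a linear isometry of `L^p(ℝ)`. -/
noncomputable def dil {p : ℝ} (hp : 1 < p) [Fact (1 ≤ ENNReal.ofReal p)] (y : ℝ) :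
    Lp ℂ (ENNReal.ofReal p) (volume : Measure ℝ) →ₗᵢ[ℂ]
      Lp ℂ (ENNReal.ofReal p) (volume : Measure ℝ) where
  toFun f := (memLp_dilFun hp y (Lp.memLp f)).toLp _
  map_add' f g := by
    rw [← MemLp.toLp_add]
    refine MemLp.toLp_congr _ _ ?_
    refine (dilFun_congr (Lp.coeFn_add f g)).trans (Eventually.of_forall fun x => ?_)
    simp [dilFun, mul_add]
  map_smul' c f := by
    rw [RingHom.id_apply, ← MemLp.toLp_const_smul]
    refine MemLp.toLp_congr _ _ ?_
    refine (dilFun_congr (Lp.coeFn_smul c f)).trans (Eventually.of_forall fun x => ?_)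
    simp [dilFun]; ring
  norm_map' f := by
    change ‖(memLp_dilFun hp y (Lp.memLp f)).toLp _‖ = _
    rw [Lp.norm_toLp, eLpNorm_dilFun hp y (Lp.memLp f).1, ← Lp.norm_def]

lemma coeFn_dil {p : ℝ} (hp : 1 < p) [Fact (1 ≤ ENNReal.ofReal p)]
    (y : ℝ) (f : Lp ℂ (ENNReal.ofReal p) (volume : Measure ℝ)) :
    dil hp y f =ᵐ[volume] dilFun p y f :=
  MemLp.coeFn_toLp (memLp_dilFun hp y (Lp.memLp f))

lemma dil_toLp {p : ℝ} (hp : 1 < p) [Fact (1 ≤ ENNReal.ofReal p)]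
    (y : ℝ) {f : ℝ → ℂ} (hf : MemLp f (ENNReal.ofReal p) volume) :
    dil hp y (hf.toLp f) = (memLp_dilFun hp y hf).toLp _ :=
  MemLp.toLp_congr (memLp_dilFun hp y (Lp.memLp _)) _ (dilFun_congr hf.coeFn_toLp)

lemma dil_zero {p : ℝ} (hp : 1 < p) [Fact (1 ≤ ENNReal.ofReal p)]
    (f : Lp ℂ (ENNReal.ofReal p) (volume : Measure ℝ)) : dil hp 0 f = f := by
  refine Lp.ext ((coeFn_dil hp 0 f).trans (Eventually.of_forall fun x => ?_))
  simp [dilFun]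

lemma dil_add {p : ℝ} (hp : 1 < p) [Fact (1 ≤ ENNReal.ofReal p)]
    (s t : ℝ) (f : Lp ℂ (ENNReal.ofReal p) (volume : Measure ℝ)) :
    dil hp (s + t) f = dil hp s (dil hp t f) := by
  refine Lp.ext ((coeFn_dil hp _ f).trans (EventuallyEq.symm ?_))
  refine (coeFn_dil hp _ _).trans ((dilFun_congr (coeFn_dil hp t f)).trans
    (Eventually.of_forall fun x => ?_))
  have h1 : -(s + t) / p = -s / p + -t / p := by ring
  have h2 : Real.exp (-t) * (Real.exp (-s) * x) = Real.exp (-(s + t)) * x := by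
    rw [neg_add, Real.exp_add]; ring
  simp only [dilFun, h2, h1, Real.exp_add, Complex.ofReal_mul]
  ring

/-- Strong continuity for continuous compactly supported functions, by dominated convergence. -/
lemma tendsto_eLpNorm_dilFun_sub {p : ℝ} (hp : 1 < p) (y₀ : ℝ) {g : ℝ → ℂ} (hg : Continuous g)
    (hs : HasCompactSupport g) :
    Tendsto (fun y => eLpNorm (dilFun p y g - dilFun p y₀ g) (ENNReal.ofReal p) volume)
      (𝓝 y₀) (𝓝 0) := by
  have hp0 : 0 < p := by linarith
  have hjc : Continuous fun z : ℝ × ℝ => dilFun p z.1 g z.2 := by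
    unfold dilFun; fun_prop
  obtain ⟨C, hC⟩ := hg.bounded_above_of_compact_support hs
  have hC0 : 0 ≤ C := (norm_nonneg _).trans (hC 0)
  obtain ⟨R, hR⟩ := hs.isCompact.isBounded.subset_closedBall 0
  -- for `y₀ - 1 < y < y₀ + 1`, the dilates are bounded by `M` and supported in `[-ρ, ρ]`
  set M : ℝ := Real.exp ((-(y₀ - 1)) / p) * C with hM
  set ρ : ℝ := Real.exp (y₀ + 1) * R with hρ
  have hM0 : 0 ≤ M := by positivity
  have hb : ∀ y ∈ Ioo (y₀ - 1) (y₀ + 1), ∀ x,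
      ‖dilFun p y g x‖ ≤ (Metric.closedBall (0 : ℝ) ρ).indicator (fun _ => M) x := by
    intro y hy x
    by_cases hx : x ∈ Metric.closedBall (0 : ℝ) ρ
    · rw [indicator_of_mem hx, dilFun, norm_mul, Complex.norm_real,
        Real.norm_of_nonneg (Real.exp_pos _).le, hM]
      refine mul_le_mul (Real.exp_le_exp.2 ?_) (hC _) (norm_nonneg _) (Real.exp_pos _).le
      have := hy.1
      gcongr
    · rw [indicator_of_notMem hx, dilFun]
      have h0 : g (Real.exp (-y) * x) = 0 := by
        by_contra h
        have h1 := hR (subset_tsupport g h)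
        rw [mem_closedBall_zero_iff, norm_mul, Real.norm_of_nonneg (Real.exp_pos _).le] at h1
        apply hx
        rw [mem_closedBall_zero_iff, hρ]
        have h2 : ‖x‖ ≤ Real.exp y * R := by
          calc ‖x‖ = Real.exp y * (Real.exp (-y) * ‖x‖) := by
                rw [← mul_assoc, ← Real.exp_add]; simp
            _ ≤ _ := by gcongr
        have hR0 : 0 ≤ R := le_trans (by positivity) h1
        refine h2.trans ?_
        have := hy.2
        gcongr
      simp [h0]
  have hq0 : ENNReal.ofReal p ≠ 0 := by simpa using hp0
  have key : Tendsto (fun y => ∫⁻ x, ‖(dilFun p y g - dilFun p y₀ g) x‖ₑ ^ p) (𝓝 y₀)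
      (𝓝 (∫⁻ _x : ℝ, 0)) := by
    refine tendsto_lintegral_filter_of_dominated_convergence
      ((Metric.closedBall (0 : ℝ) ρ).indicator (fun _ => ENNReal.ofReal (2 * M) ^ p)) ?_ ?_ ?_ ?_
    · refine Eventually.of_forall fun y => ?_
      have h1 : Continuous (dilFun p y g - dilFun p y₀ g) :=
        (hjc.comp (by fun_prop : Continuous fun x : ℝ => (y, x))).sub
          (hjc.comp (by fun_prop : Continuous fun x : ℝ => (y₀, x)))
      exact h1.measurable.enorm.pow_const _
    · filter_upwards [Ioo_mem_nhds (show y₀ - 1 < y₀ by linarith)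
        (show y₀ < y₀ + 1 by linarith)] with y hy
      refine Eventually.of_forall fun x => ?_
      have h1 := hb y hy x
      have h2 := hb y₀ ⟨by linarith, by linarith⟩ x
      have h3 : ‖(dilFun p y g - dilFun p y₀ g) x‖ ≤
          2 * (Metric.closedBall (0 : ℝ) ρ).indicator (fun _ => M) x := by
        rw [Pi.sub_apply]
        exact (norm_sub_le _ _).trans (by linarith)
      by_cases hx : x ∈ Metric.closedBall (0 : ℝ) ρ
      · rw [indicator_of_mem hx] at h3 ⊢
        rw [← ofReal_norm]
        gcongr
      · rw [indicator_of_notMem hx] at h3 ⊢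
        have h4 : (dilFun p y g - dilFun p y₀ g) x = 0 := by
          rw [← norm_le_zero_iff]; simpa using h3
        simp [h4, hp0]
    · rw [lintegral_indicator measurableSet_closedBall, setLIntegral_const]
      refine ENNReal.mul_ne_top (ENNReal.rpow_ne_top_of_nonneg hp0.le ENNReal.ofReal_ne_top) ?_
      exact measure_closedBall_lt_top.ne
    · refine Eventually.of_forall fun x => ?_
      have h1 : Continuous fun y => ‖(dilFun p y g - dilFun p y₀ g) x‖ₑ ^ p := by
        have : Continuous fun y => (dilFun p y g - dilFun p y₀ g) x :=
          (hjc.comp (by fun_prop : Continuous fun y : ℝ => (y, x))).sub continuous_const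
        exact ENNReal.continuous_rpow_const.comp this.enorm
      have h2 := h1.tendsto y₀
      simpa [hp0] using h2
  have h5 := (ENNReal.continuous_rpow_const (y := 1 / p)).tendsto _ |>.comp key
  simp only [eLpNorm_eq_lintegral_rpow_enorm_toReal hq0 ENNReal.ofReal_ne_top,
    ENNReal.toReal_ofReal hp0.le]
  simpa [hp0, Function.comp_def] using h5

/-- The dilations are strongly continuous, by density of the continuous compactly supported
functions and uniform boundedness. -/
lemma continuous_dil {p : ℝ} (hp : 1 < p) [Fact (1 ≤ ENNReal.ofReal p)]
    (f : Lp ℂ (ENNReal.ofReal p) (volume : Measure ℝ)) :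
    Continuous fun y => dil hp y f := by
  rw [continuous_iff_continuousAt]
  intro y₀
  rw [ContinuousAt, Metric.tendsto_nhds]
  intro ε hε
  obtain ⟨g, hgs, hfg, hgc, hgm⟩ := (Lp.memLp f).exists_hasCompactSupport_eLpNorm_sub_le
    ENNReal.ofReal_ne_top (ε := ENNReal.ofReal (ε / 4)) (by simpa using hε)
  have hfg' : ‖f - hgm.toLp g‖ ≤ ε / 4 := by
    have h1 : f - hgm.toLp g = ((Lp.memLp f).sub hgm).toLp _ := by
      rw [MemLp.toLp_sub (Lp.memLp f) hgm, Lp.toLp_coeFn]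
    rw [h1, Lp.norm_toLp]
    exact ENNReal.toReal_le_of_le_ofReal (by positivity) hfg
  have hg := tendsto_eLpNorm_dilFun_sub hp y₀ hgc hgs
  have hev : ∀ᶠ y in 𝓝 y₀, eLpNorm (dilFun p y g - dilFun p y₀ g) (ENNReal.ofReal p) volume
      < ENNReal.ofReal (ε / 4) := hg.eventually_lt_const (by simpa using hε)
  filter_upwards [hev] with y hy
  have h2 : ‖dil hp y (hgm.toLp g) - dil hp y₀ (hgm.toLp g)‖ ≤ ε / 4 := by
    rw [dil_toLp, dil_toLp, ← MemLp.toLp_sub, Lp.norm_toLp]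
    exact ENNReal.toReal_le_of_le_ofReal (by positivity) hy.le
  have h3 : dil hp y f - dil hp y₀ f = dil hp y (f - hgm.toLp g) - dil hp y₀ (f - hgm.toLp g) +
      (dil hp y (hgm.toLp g) - dil hp y₀ (hgm.toLp g)) := by
    rw [map_sub, map_sub]; abel
  rw [dist_eq_norm, h3]
  calc _ ≤ ‖dil hp y (f - hgm.toLp g)‖ + ‖dil hp y₀ (f - hgm.toLp g)‖ + _ :=
        (norm_add_le _ _).trans (add_le_add_left (norm_sub_le _ _) _)
    _ ≤ ε / 4 + ε / 4 + ε / 4 := by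
        rw [LinearIsometry.norm_map, LinearIsometry.norm_map]
        gcongr
    _ < ε := by linarith

/-! ### Averages of dilations -/

lemma integrable_smul_dil {p : ℝ} (hp : 1 < p) [Fact (1 ≤ ENNReal.ofReal p)] {k : ℝ → ℂ}
    (hk : Integrable k) (f : Lp ℂ (ENNReal.ofReal p) (volume : Measure ℝ)) :
    Integrable fun y => k y • dil hp y f :=
  Integrable.smul_bdd hk ‖f‖ (continuous_dil hp f).aestronglyMeasurable
    (Eventually.of_forall fun y => by rw [LinearIsometry.norm_map])

section
variable {p : ℝ} {hp : 1 < p} [Fact (1 ≤ ENNReal.ofReal p)] {k : ℝ → ℂ}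
  {T : Lp ℂ (ENNReal.ofReal p) (volume : Measure ℝ) →L[ℂ]
    Lp ℂ (ENNReal.ofReal p) (volume : Measure ℝ)}

lemma commute_dil (hk : Integrable k) (hT : ∀ f, T f = ∫ y, k y • dil hp y f) (s : ℝ) :
    T * (dil hp s).toContinuousLinearMap = (dil hp s).toContinuousLinearMap * T := by
  ext1 f
  change T (dil hp s f) = dil hp s (T f)
  rw [hT, hT]
  have h1 := (dil hp s).toContinuousLinearMap.integral_comp_comm (integrable_smul_dil hp hk f)
  refine Eq.trans ?_ h1
  refine integral_congr_ae (Eventually.of_forall fun y => ?_)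
  change k y • dil hp y (dil hp s f) = dil hp s (k y • dil hp y f)
  rw [map_smul, ← dil_add, ← dil_add, add_comm]

/-- Although `s ↦ dil s` is only strongly continuous, `s ↦ T ∘ dil s` is norm continuous, because
it is given by the translates of `k`, which vary continuously in `L¹`. -/
lemma continuous_mul_dil (hk : Integrable k) (hT : ∀ f, T f = ∫ y, k y • dil hp y f) :
    Continuous fun s => T * (dil hp s).toContinuousLinearMap := by
  let K : ℝ → Lp ℂ 1 (volume : Measure ℝ) := fun s => DomAddAct.mk (-s) +ᵥ hk.toL1 k
  have : Fact ((1 : ENNReal) ≠ ⊤) := ⟨ENNReal.one_ne_top⟩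
  have hKc : Continuous K := by
    have h1 : Continuous fun s : ℝ => (DomAddAct.mk (-s) : ℝᵈᵃᵃ) :=
      DomAddAct.continuous_mk.comp continuous_neg
    exact h1.vadd continuous_const
  have hKe : ∀ s, K s =ᵐ[volume] fun z => k (z - s) := by
    intro s
    refine (DomAddAct.vadd_Lp_ae_eq _ _).trans ?_
    have h2 := (measurePreserving_add_left volume (-s)).quasiMeasurePreserving.ae_eq
      (Integrable.coeFn_toL1 hk)
    refine h2.trans (Eventually.of_forall fun z => ?_)
    simp only [Function.comp]
    congr 1
    ring
  have hrep : ∀ s f, (T * (dil hp s).toContinuousLinearMap) f = ∫ z, K s z • dil hp z f := by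
    intro s f
    change T (dil hp s f) = _
    rw [hT]
    have h3 : ∫ z, K s z • dil hp z f = ∫ z, k (z - s) • dil hp z f := by
      refine integral_congr_ae ?_
      filter_upwards [hKe s] with z hz
      rw [hz]
    rw [h3, ← integral_add_right_eq_self (fun z => k (z - s) • dil hp z f) s]
    refine integral_congr_ae (Eventually.of_forall fun y => ?_)
    simp only [dil_add, add_sub_cancel_right]
  have hKint : ∀ s f, Integrable fun z => K s z • dil hp z f := fun s f =>
    integrable_smul_dil hp (L1.integrable_coeFn (K s)) f
  rw [continuous_iff_continuousAt]
  intro s₀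
  rw [ContinuousAt, tendsto_iff_norm_sub_tendsto_zero]
  have hK0 := tendsto_iff_norm_sub_tendsto_zero.1 (hKc.tendsto s₀)
  refine squeeze_zero (fun _ => norm_nonneg _) (fun s => ?_) hK0
  refine ContinuousLinearMap.opNorm_le_bound _ (norm_nonneg _) fun f => ?_
  rw [sub_apply, hrep, hrep, ← integral_sub (hKint _ _) (hKint _ _),
    L1.norm_eq_integral_norm, ← integral_mul_const]
  refine (norm_integral_le_integral_norm _).trans (le_of_eq (integral_congr_ae ?_))
  filter_upwards [Lp.coeFn_sub (K s) (K s₀)] with z hz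
  rw [hz, ← sub_smul, norm_smul, LinearIsometry.norm_map, Pi.sub_apply]

/-- The spectrum of a convolution operator over the dilation group lies in the range of the Fourier
transform of its kernel, up to the value `0`. -/
lemma spectrum_subset_fourierVal (hk : Integrable k) (hT : ∀ f, T f = ∫ y, k y • dil hp y f)
    {z : ℂ} (hz : z ∈ spectrum ℂ T) : z = 0 ∨ ∃ t, z = fourierVal k t := by
  rcases subsingleton_or_nontrivial (Lp ℂ (ENNReal.ofReal p) (volume : Measure ℝ)) with h | h
  · exact absurd hz (by simp [spectrum.of_subsingleton])
  have hDn : ∀ s, ‖(dil hp s).toContinuousLinearMap‖ ≤ 1 := fun s =>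
    ContinuousLinearMap.opNorm_le_bound _ zero_le_one fun f => by
      change ‖dil hp s f‖ ≤ _
      rw [LinearIsometry.norm_map, one_mul]
  have hc := continuous_mul_dil hk hT
  refine spectrum_subset_of_commute (D := fun s => (dil hp s).toContinuousLinearMap)
    ?_ ?_ hDn (commute_dil hk hT) hc hk ?_ hz
  · ext1 f; exact dil_zero hp f
  · intro s t; ext1 f; exact dil_add hp s t f
  · have : SecondCountableTopologyEither ℝ (Lp ℂ (ENNReal.ofReal p) (volume : Measure ℝ) →L[ℂ]
        Lp ℂ (ENNReal.ofReal p) (volume : Measure ℝ)) := secondCountableTopologyEither_of_left ℝ _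
    have hInt : Integrable fun y => k y • (T * (dil hp y).toContinuousLinearMap) :=
      Integrable.smul_bdd hk ‖T‖ hc.aestronglyMeasurable (Eventually.of_forall fun y =>
        (norm_mul_le _ _).trans (mul_le_of_le_one_right (norm_nonneg _) (hDn y)))
    ext1 f
    refine Eq.trans ?_ (ContinuousLinearMap.integral_apply hInt f).symm
    change T (T f) = _
    rw [hT f, ← T.integral_comp_comm (integrable_smul_dil hp hk f)]
    refine integral_congr_ae (Eventually.of_forall fun y => ?_)
    exact map_smul T _ _

/-- Approximate eigenvectors of the dilations `dil y`, `y ≥ 0`, are approximate eigenvectors of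
`T`. -/
lemma mem_spectrum_of_approx (hk : Integrable k) (hk0 : ∀ y < 0, k y = 0)
    (hT : ∀ f, T f = ∫ y, k y • dil hp y f) (t : ℝ)
    (v : ℕ → Lp ℂ (ENNReal.ofReal p) (volume : Measure ℝ)) (hv : ∀ n, ‖v n‖ = 1)
    (hlim : ∀ y, 0 ≤ y → Tendsto
      (fun n => ‖dil hp y (v n) - Complex.exp (Complex.I * (t * y)) • v n‖) atTop (𝓝 0)) :
    fourierVal k t ∈ spectrum ℂ T := by
  have hexp : ∀ y : ℝ, ‖Complex.exp (Complex.I * (t * y))‖ = 1 := fun y => by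
    rw [mul_comm, ← Complex.ofReal_mul, Complex.norm_exp_ofReal_mul_I]
  have hcexp : Continuous fun y : ℝ => Complex.exp (Complex.I * (t * y)) := by fun_prop
  have hkint : Integrable fun y : ℝ => k y * Complex.exp (Complex.I * (t * y)) :=
    hk.mul_bdd (c := 1) hcexp.aestronglyMeasurable
      (Eventually.of_forall fun y => (hexp y).le)
  have hrep : ∀ n, T (v n) - fourierVal k t • v n =
      ∫ y, k y • (dil hp y (v n) - Complex.exp (Complex.I * (t * y)) • v n) := by
    intro n
    simp only [smul_sub, smul_smul]
    rw [integral_sub (integrable_smul_dil hp hk _) (hkint.smul_const _), hT, fourierVal,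
      integral_smul_const]
  have hto : Tendsto (fun n => T (v n) - fourierVal k t • v n) atTop (𝓝 0) := by
    simp only [hrep]
    have h0 : (0 : Lp ℂ (ENNReal.ofReal p) (volume : Measure ℝ)) =
      ∫ _y : ℝ, (0 : Lp ℂ (ENNReal.ofReal p) (volume : Measure ℝ)) := by simp
    rw [h0]
    refine tendsto_integral_of_dominated_convergence (fun y => ‖k y‖ * 2) (fun n => ?_)
      (hk.norm.mul_const _) (fun n => Eventually.of_forall fun y => ?_)
      (Eventually.of_forall fun y => ?_)
    · exact hk.1.smul ((continuous_dil hp _).sub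
        (hcexp.smul continuous_const)).aestronglyMeasurable
    · rw [norm_smul]
      gcongr
      refine (norm_sub_le _ _).trans ?_
      rw [LinearIsometry.norm_map, norm_smul, hexp, hv]
      norm_num
    · rcases lt_or_ge y 0 with hy | hy
      · simp [hk0 y hy]
      · rw [tendsto_zero_iff_norm_tendsto_zero]
        simp only [norm_smul]
        simpa using (hlim y hy).const_mul ‖k y‖
  intro hu
  obtain ⟨R, hR⟩ := hu.exists_left_inv
  have h1 : ∀ n, R (-(T (v n) - fourierVal k t • v n)) = v n := by
    intro n
    have : (R * (algebraMap ℂ _ (fourierVal k t) - T)) (v n) = v n := by rw [hR]; rfl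
    rw [neg_sub]
    exact this
  have h2 : Tendsto (fun n => ‖v n‖) atTop (𝓝 0) := by
    have h3 := ((R.continuous.tendsto _).comp hto.neg).norm
    simpa only [Function.comp_def, h1, neg_zero, map_zero, norm_zero] using h3
  simp only [hv] at h2
  exact one_ne_zero (tendsto_nhds_unique tendsto_const_nhds h2)

end

/-! ### Approximate eigenvectors of the dilations -/

/-- On the interval `(e^a, e^b]`, the function `x ↦ x^{-1/p - it}`; a truncation of a generalised
eigenfunction of all dilations. -/
noncomputable def truncFun (p t a b : ℝ) : ℝ → ℂ :=
  (Ioc (Real.exp a) (Real.exp b)).indicator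
    fun x => Complex.exp (-((1 / p + t * Complex.I) * Real.log x))

lemma measurable_truncFun (p t a b : ℝ) : Measurable (truncFun p t a b) :=
  Measurable.indicator (by fun_prop) measurableSet_Ioc

lemma eLpNorm_truncFun {p : ℝ} (hp : 1 < p) (t : ℝ) {a b : ℝ} (hab : a ≤ b) :
    eLpNorm (truncFun p t a b) (ENNReal.ofReal p) volume = ENNReal.ofReal ((b - a) ^ (1 / p)) := by
  have hp0 : 0 < p := by linarith
  have hq0 : ENNReal.ofReal p ≠ 0 := by simpa using hp0
  rw [eLpNorm_eq_lintegral_rpow_enorm_toReal hq0 ENNReal.ofReal_ne_top,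
    ENNReal.toReal_ofReal hp0.le, ← ENNReal.ofReal_rpow_of_nonneg (by linarith) (by positivity)]
  congr 1
  have h1 : ∀ x, ‖truncFun p t a b x‖ₑ ^ p =
      (Ioc (Real.exp a) (Real.exp b)).indicator (fun x => ENNReal.ofReal (x⁻¹)) x := by
    intro x
    by_cases hx : x ∈ Ioc (Real.exp a) (Real.exp b)
    · have hx0 : 0 < x := (Real.exp_pos a).trans hx.1
      rw [truncFun, indicator_of_mem hx, indicator_of_mem hx, ← ofReal_norm,
        ENNReal.ofReal_rpow_of_nonneg (norm_nonneg _) hp0.le, Complex.norm_exp, ← Real.exp_mul]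
      congr 1
      have h2 : (-((1 / (p : ℂ) + t * Complex.I) * (Real.log x : ℂ))).re = -(1 / p * Real.log x) := by
        rw [show (1 / (p : ℂ)) = ((1 / p : ℝ) : ℂ) by push_cast; rfl]
        simp only [Complex.neg_re, Complex.mul_re, Complex.add_re, Complex.ofReal_re,
          Complex.I_re, Complex.ofReal_im, Complex.I_im, mul_zero, mul_one, sub_zero, add_zero]
      rw [h2, show -(1 / p * Real.log x) * p = -Real.log x by field_simp, Real.exp_neg,
        Real.exp_log hx0]
    · rw [truncFun, indicator_of_notMem hx, indicator_of_notMem hx]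
      simp [hp0]
  have hle : Real.exp a ≤ Real.exp b := Real.exp_le_exp.2 hab
  have hInt : IntervalIntegrable (fun x : ℝ => x⁻¹) volume (Real.exp a) (Real.exp b) := by
    refine intervalIntegral.intervalIntegrable_inv (fun x hx => ?_) continuousOn_id
    rw [uIcc_of_le hle] at hx
    exact ((Real.exp_pos a).trans_le hx.1).ne'
  rw [lintegral_congr h1, lintegral_indicator measurableSet_Ioc,
    ← ofReal_integral_eq_lintegral_ofReal
      ((intervalIntegrable_iff_integrableOn_Ioc_of_le hle).1 hInt),
    ← intervalIntegral.integral_of_le hle, integral_inv_of_pos (Real.exp_pos _) (Real.exp_pos _),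
    Real.log_div (Real.exp_pos _).ne' (Real.exp_pos _).ne', Real.log_exp, Real.log_exp]
  filter_upwards [ae_restrict_mem measurableSet_Ioc] with x hx
  exact (inv_pos.2 ((Real.exp_pos a).trans hx.1)).le

lemma memLp_truncFun {p : ℝ} (hp : 1 < p) (t : ℝ) {a b : ℝ} (hab : a ≤ b) :
    MemLp (truncFun p t a b) (ENNReal.ofReal p) volume :=
  ⟨(measurable_truncFun p t a b).aestronglyMeasurable, by
    rw [eLpNorm_truncFun hp t hab]; exact ENNReal.ofReal_lt_top⟩

lemma truncFun_add (p t : ℝ) {a b c : ℝ} (hab : a ≤ b) (hbc : b ≤ c) :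
    truncFun p t a b + truncFun p t b c = truncFun p t a c := by
  have h1 := Ioc_union_Ioc_eq_Ioc (Real.exp_le_exp.2 hab) (Real.exp_le_exp.2 hbc)
  unfold truncFun
  rw [← h1]
  refine (indicator_union_of_disjoint ?_ _).symm
  rw [Set.disjoint_left]
  intro x hx hx'
  exact absurd hx.2 (not_le.2 hx'.1)

/-- A dilation shifts the logarithmic interval and multiplies by a unimodular constant. -/
lemma dilFun_truncFun {p : ℝ} (t y a b : ℝ) :
    dilFun p y (truncFun p t a b) =
      Complex.exp (Complex.I * (t * y)) • truncFun p t (a + y) (b + y) := by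
  funext x
  have hiff : Real.exp (-y) * x ∈ Ioc (Real.exp a) (Real.exp b) ↔
      x ∈ Ioc (Real.exp (a + y)) (Real.exp (b + y)) := by
    have hE := Real.exp_pos y
    simp only [mem_Ioc, Real.exp_add, Real.exp_neg]
    rw [inv_mul_eq_div, lt_div_iff₀ hE, div_le_iff₀ hE]
  simp only [dilFun, Pi.smul_apply, smul_eq_mul]
  by_cases hx : x ∈ Ioc (Real.exp (a + y)) (Real.exp (b + y))
  · have hx0 : 0 < x := (Real.exp_pos _).trans hx.1
    rw [truncFun, truncFun, indicator_of_mem hx, indicator_of_mem (hiff.2 hx),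
      Real.log_mul (Real.exp_pos _).ne' hx0.ne', Real.log_exp, Complex.ofReal_exp,
      ← Complex.exp_add, ← Complex.exp_add]
    congr 1
    push_cast
    ring
  · rw [truncFun, truncFun, indicator_of_notMem hx, indicator_of_notMem (fun h => hx (hiff.1 h))]
    simp

/-- Normalised truncations over `(1, e^{n+1}]` are approximate eigenvectors of all dilations `dil y`,
`y ≥ 0`, because dilating only changes the two ends of the logarithmic interval, by a fixed length
`y`. -/
lemma exists_approx_eigenvectors {p : ℝ} (hp : 1 < p) [Fact (1 ≤ ENNReal.ofReal p)] (t : ℝ) :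
    ∃ v : ℕ → Lp ℂ (ENNReal.ofReal p) (volume : Measure ℝ), (∀ n, ‖v n‖ = 1) ∧
      ∀ y, 0 ≤ y → Tendsto
        (fun n => ‖dil hp y (v n) - Complex.exp (Complex.I * (t * y)) • v n‖) atTop (𝓝 0) := by
  have hp0 : 0 < p := by linarith
  let N : ℕ → ℝ := fun n => n + 1
  have hN : ∀ n, 0 < N n := fun n => by positivity
  let c : ℕ → ℝ := fun n => ((N n) ^ (1 / p))⁻¹
  have hc : ∀ n, 0 < c n := fun n => inv_pos.2 (Real.rpow_pos_of_pos (hN n) _)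
  have hcn : ∀ n, ‖(c n : ℂ)‖ = c n := fun n => by
    rw [Complex.norm_real, Real.norm_of_nonneg (hc n).le]
  have hnorm : ∀ {a b : ℝ} (hab : a ≤ b),
      ‖(memLp_truncFun hp t hab).toLp _‖ = (b - a) ^ (1 / p) := by
    intro a b hab
    rw [Lp.norm_toLp, eLpNorm_truncFun hp t hab, ENNReal.toReal_ofReal]
    exact Real.rpow_nonneg (by linarith) _
  refine ⟨fun n => (c n : ℂ) • (memLp_truncFun hp t (hN n).le).toLp _, fun n => ?_, fun y hy => ?_⟩
  · rw [norm_smul, hcn, hnorm (hN n).le, sub_zero]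
    exact inv_mul_cancel₀ (Real.rpow_pos_of_pos (hN n) _).ne'
  · have hexp : ‖Complex.exp (Complex.I * (t * y))‖ = 1 := by
      rw [mul_comm, ← Complex.ofReal_mul, Complex.norm_exp_ofReal_mul_I]
    have hb : ∀ n, ‖dil hp y ((c n : ℂ) • (memLp_truncFun hp t (hN n).le).toLp _) -
        Complex.exp (Complex.I * (t * y)) • (c n : ℂ) • (memLp_truncFun hp t (hN n).le).toLp _‖
        ≤ c n * (y ^ (1 / p) + y ^ (1 / p)) := by
      intro n
      have h1 : (memLp_truncFun hp t (a := 0 + y) (b := N n + y) (by linarith [hN n])).toLp _ -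
          (memLp_truncFun hp t (hN n).le).toLp _ =
          (memLp_truncFun hp t (a := N n) (b := N n + y) (by linarith)).toLp _ -
          (memLp_truncFun hp t hy).toLp _ := by
        rw [← MemLp.toLp_sub, ← MemLp.toLp_sub]
        congr 1
        have e1 := truncFun_add p t (a := 0) (b := 0 + y) (c := N n + y) (by linarith)
          (by linarith [hN n])
        have e2 := truncFun_add p t (a := 0) (b := N n) (c := N n + y) (hN n).le (by linarith)
        rw [zero_add] at e1 ⊢
        rw [← e2] at e1
        rw [sub_eq_sub_iff_add_eq_add, add_comm, e1, add_comm]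
      have h2 : dil hp y ((memLp_truncFun hp t (hN n).le).toLp _) =
          Complex.exp (Complex.I * (t * y)) •
          (memLp_truncFun hp t (a := 0 + y) (b := N n + y) (by linarith [hN n])).toLp _ := by
        rw [dil_toLp, ← MemLp.toLp_const_smul]
        congr 1
        exact dilFun_truncFun _ _ _ _
      rw [map_smul, h2, smul_comm, ← smul_sub, ← smul_sub, h1, norm_smul, norm_smul, hexp, hcn,
        one_mul]
      refine mul_le_mul_of_nonneg_left ((norm_sub_le _ _).trans (le_of_eq ?_)) (hc n).le
      rw [hnorm (show N n ≤ N n + y by linarith), hnorm hy]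
      simp
    refine squeeze_zero (fun _ => norm_nonneg _) hb ?_
    have hN' : Tendsto N atTop atTop :=
      tendsto_atTop_add_const_right _ _ tendsto_natCast_atTop_atTop
    have hc0 : Tendsto c atTop (𝓝 0) :=
      tendsto_inv_atTop_zero.comp ((tendsto_rpow_atTop (by positivity)).comp hN')
    simpa using hc0.mul_const (y ^ (1 / p) + y ^ (1 / p))

/-! ### The kernel of the Cesàro operator -/

lemma image_exp_neg : (fun y : ℝ => Real.exp (-y)) '' Ioi 0 = Ioo 0 1 := by
  ext r
  constructor
  · rintro ⟨y, hy, rfl⟩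
    exact ⟨Real.exp_pos _, Real.exp_lt_one_iff.2 (neg_lt_zero.2 hy)⟩
  · rintro ⟨h0, h1⟩
    exact ⟨-Real.log r, neg_pos.2 (Real.log_neg h0 h1), by simp [Real.exp_log h0]⟩

lemma hasDerivWithinAt_exp_neg (s : Set ℝ) (y : ℝ) :
    HasDerivWithinAt (fun y : ℝ => Real.exp (-y)) (-Real.exp (-y)) s y := by
  have := ((hasDerivAt_id y).neg.exp).hasDerivWithinAt (s := s)
  simpa using! this

lemma injOn_exp_neg (s : Set ℝ) : InjOn (fun y : ℝ => Real.exp (-y)) s := fun _ _ _ _ h =>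
  neg_injective (Real.exp_injective h)

lemma integral_Ioo_eq_integral_exp_neg (g : ℝ → ℂ) :
    ∫ r in Ioo (0 : ℝ) 1, g r = ∫ y in Ioi (0 : ℝ), (Real.exp (-y) : ℂ) * g (Real.exp (-y)) := by
  have h := integral_image_eq_integral_abs_deriv_smul measurableSet_Ioi
    (fun y _ => hasDerivWithinAt_exp_neg (Ioi 0) y) (injOn_exp_neg _) g
  rw [image_exp_neg] at h
  simpa only [abs_neg, abs_of_pos (Real.exp_pos _), Complex.real_smul] using h

lemma integrableOn_Ioo_iff_exp_neg (g : ℝ → ℂ) :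
    IntegrableOn g (Ioo (0 : ℝ) 1) ↔
      IntegrableOn (fun y => (Real.exp (-y) : ℂ) * g (Real.exp (-y))) (Ioi (0 : ℝ)) := by
  have h := integrableOn_image_iff_integrableOn_abs_deriv_smul measurableSet_Ioi
    (fun y _ => hasDerivWithinAt_exp_neg (Ioi 0) y) (injOn_exp_neg _) g
  rw [image_exp_neg] at h
  simpa only [abs_neg, abs_of_pos (Real.exp_pos _), Complex.real_smul] using h

/-- The density `k(y) = β e^{-y} (1 - e^{-y})^{β-1} e^{y/p}` on `(0, ∞)` with respect to which `𝒞_β`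
is an average of the normalised dilations. The factor `e^{y/p}` undoes their normalisation. -/
noncomputable def cesaroKernel (p β : ℝ) : ℝ → ℂ :=
  (Ioi (0 : ℝ)).indicator fun y =>
    (Real.exp (-y) : ℂ) * ((β * (1 - Real.exp (-y)) ^ (β - 1) * Real.exp (y / p) : ℝ) : ℂ)

lemma measurable_cesaroKernel (p β : ℝ) : Measurable (cesaroKernel p β) :=
  Measurable.indicator (by fun_prop) measurableSet_Ioi

/-- With `r = e^{-y}`, the integrand of the Fourier transform of the kernel is `e^{-y}` (the Jacobian)
times a beta integrand in `r`. -/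
lemma cesaroKernel_mul_exp {p β : ℝ} (t : ℝ) {y : ℝ} (hy : 0 < y) :
    cesaroKernel p β y * Complex.exp (Complex.I * (t * y)) =
      (Real.exp (-y) : ℂ) * (β * (((Real.exp (-y) : ℝ) : ℂ) ^ ((1 - 1 / p - t * Complex.I : ℂ) - 1) *
        (1 - ((Real.exp (-y) : ℝ) : ℂ)) ^ ((β : ℂ) - 1))) := by
  have h1 : 0 ≤ 1 - Real.exp (-y) := by
    have := Real.exp_lt_one_iff.2 (neg_lt_zero.2 hy); linarith
  have h2 : (1 - ((Real.exp (-y) : ℝ) : ℂ)) ^ ((β : ℂ) - 1) =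
      (((1 - Real.exp (-y)) ^ (β - 1) : ℝ) : ℂ) := by
    rw [Complex.ofReal_cpow h1]; push_cast; rfl
  have h3 : ((Real.exp (-y) : ℝ) : ℂ) ^ ((1 - 1 / p - t * Complex.I : ℂ) - 1) =
      (Real.exp (y / p) : ℂ) * Complex.exp (Complex.I * (t * y)) := by
    rw [Complex.cpow_def_of_ne_zero (by exact_mod_cast (Real.exp_pos _).ne'), ← Complex.ofReal_log
      (Real.exp_pos _).le, Real.log_exp, Complex.ofReal_exp, ← Complex.exp_add]
    congr 1
    push_cast
    ring
  rw [cesaroKernel, indicator_of_mem (mem_Ioi.2 hy), h2, h3]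
  push_cast
  ring

lemma betaIntegrand_integrableOn {p β : ℝ} (hp : 1 < p) (hβ : 0 < β) (t : ℝ) :
    IntegrableOn (fun r : ℝ => (β : ℂ) * ((r : ℂ) ^ ((1 - 1 / p - t * Complex.I : ℂ) - 1) *
        (1 - (r : ℂ)) ^ ((β : ℂ) - 1))) (Ioo (0 : ℝ) 1) := by
  have hre : 0 < (1 - 1 / (p : ℂ) - t * Complex.I).re := by
    have : 1 / p < 1 := by rw [div_lt_one (by linarith)]; exact hp
    rw [show (1 / (p : ℂ)) = ((1 / p : ℝ) : ℂ) by push_cast; rfl]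
    simp only [Complex.sub_re, Complex.one_re, Complex.mul_re, Complex.ofReal_re,
      Complex.I_re, Complex.ofReal_im, Complex.I_im, mul_zero, zero_mul, sub_zero]
    linarith
  have h := Complex.betaIntegral_convergent hre (v := (β : ℂ)) (by simpa using hβ)
  rw [intervalIntegrable_iff_integrableOn_Ioo_of_le zero_le_one] at h
  exact h.const_mul _

lemma integrable_cesaroKernel {p β : ℝ} (hp : 1 < p) (hβ : 0 < β) :
    Integrable (cesaroKernel p β) := by
  have h := (integrableOn_Ioo_iff_exp_neg _).1 (betaIntegrand_integrableOn hp hβ 0)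
  have h2 : IntegrableOn (cesaroKernel p β) (Ioi 0) := by
    refine h.congr_fun (fun y hy => ?_) measurableSet_Ioi
    have := cesaroKernel_mul_exp (p := p) (β := β) 0 hy
    simp only [← this]
    simp
  rw [← integrable_indicator_iff measurableSet_Ioi] at h2
  have h3 : (Ioi (0 : ℝ)).indicator (cesaroKernel p β) = cesaroKernel p β := by
    rw [cesaroKernel, indicator_indicator, inter_self]
  rwa [h3] at h2

lemma fourierVal_cesaroKernel {p β : ℝ} (hp : 1 < p) (hβ : 0 < β) (t : ℝ) :
    fourierVal (cesaroKernel p β) t = (Real.Gamma (β + 1) : ℂ) *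
      (Complex.Gamma (1 - 1 / (p : ℂ) - t * Complex.I) /
        Complex.Gamma ((β : ℂ) + 1 - 1 / (p : ℂ) - t * Complex.I)) := by
  have hre0 : 0 < 1 - 1 / p := by
    have : 1 / p < 1 := by rw [div_lt_one (by linarith)]; exact hp
    linarith
  have hre : (1 - 1 / (p : ℂ) - t * Complex.I).re = 1 - 1 / p := by
    rw [show (1 / (p : ℂ)) = ((1 / p : ℝ) : ℂ) by push_cast; rfl]
    simp only [Complex.sub_re, Complex.one_re, Complex.mul_re, Complex.ofReal_re,
      Complex.I_re, Complex.ofReal_im, Complex.I_im, mul_zero, zero_mul, sub_zero]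
  have h1 : fourierVal (cesaroKernel p β) t =
      ∫ y in Ioi 0, cesaroKernel p β y * Complex.exp (Complex.I * (t * y)) := by
    rw [fourierVal]
    refine (setIntegral_eq_integral_of_forall_compl_eq_zero fun y hy => ?_).symm
    rw [cesaroKernel, indicator_of_notMem hy, zero_mul]
  rw [h1, setIntegral_congr_fun measurableSet_Ioi (fun y hy => cesaroKernel_mul_exp t hy),
    ← integral_Ioo_eq_integral_exp_neg (fun r : ℝ => (β : ℂ) *
      ((r : ℂ) ^ ((1 - 1 / p - t * Complex.I : ℂ) - 1) * (1 - (r : ℂ)) ^ ((β : ℂ) - 1))),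
    integral_const_mul, ← integral_Ioc_eq_integral_Ioo,
    ← intervalIntegral.integral_of_le zero_le_one]
  have h2 := Complex.Gamma_mul_Gamma_eq_betaIntegral (s := 1 - 1 / (p : ℂ) - t * Complex.I)
    (t := (β : ℂ)) (by rw [hre]; exact hre0) (by simpa using hβ)
  rw [Complex.betaIntegral, show (1 - 1 / (p : ℂ) - t * Complex.I) + β =
    (β : ℂ) + 1 - 1 / (p : ℂ) - t * Complex.I by ring] at h2
  have h3 : Complex.Gamma ((β : ℂ) + 1 - 1 / (p : ℂ) - t * Complex.I) ≠ 0 := by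
    apply Complex.Gamma_ne_zero_of_re_pos
    rw [show (β : ℂ) + 1 - 1 / (p : ℂ) - t * Complex.I =
      β + (1 - 1 / (p : ℂ) - t * Complex.I) by ring, Complex.add_re, hre, Complex.ofReal_re]
    linarith
  have h4 : (Real.Gamma (β + 1) : ℂ) = β * Complex.Gamma β := by
    rw [Real.Gamma_add_one hβ.ne', Complex.Gamma_ofReal]; push_cast; rfl
  rw [h4, ← mul_div_assoc, eq_div_iff h3, mul_assoc _ (Complex.Gamma β), mul_comm (Complex.Gamma β),
    h2]
  ring

/-- The substitution `s = r x` gives the same formula on both half-lines. -/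
lemma cesaroR_eq_integral_Ioo {β : ℝ} (f : ℝ → ℂ) {x : ℝ} (hx : x ≠ 0) :
    cesaroR β f x =
      ∫ r in Ioo (0 : ℝ) 1, ((β * (1 - r) ^ (β - 1) : ℝ) : ℂ) * f (r * x) := by
  rw [← integral_Ioc_eq_integral_Ioo, ← intervalIntegral.integral_of_le zero_le_one]
  have hc : ∀ {c : ℝ}, 0 < c → β / c ^ β * c ^ (β - 1) * c = β := by
    intro c hc
    rw [Real.rpow_sub_one hc.ne']
    have := (Real.rpow_pos_of_pos hc β).ne'
    field_simp
  rcases hx.lt_or_gt with h | h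
  · rw [cesaroR, if_neg (not_lt.2 h.le), if_pos h, ← integral_Ioc_eq_integral_Ioo,
      ← intervalIntegral.integral_of_le h.le]
    have hs := intervalIntegral.smul_integral_comp_mul_right (a := 0) (b := 1)
      (fun s => (((s - x) ^ (β - 1) : ℝ) : ℂ) * f s) x
    rw [zero_mul, one_mul, intervalIntegral.integral_symm x 0] at hs
    rw [← neg_eq_iff_eq_neg] at hs
    rw [← hs, Complex.real_smul, ← neg_mul, ← mul_assoc, ← intervalIntegral.integral_const_mul]
    refine intervalIntegral.integral_congr fun r hr => ?_
    rw [uIcc_of_le zero_le_one] at hr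
    have h1 : r * x - x = |x| * (1 - r) := by rw [abs_of_neg h]; ring
    have h2 := hc (abs_pos.2 hx)
    rw [h1, Real.mul_rpow (abs_nonneg x) (by linarith [hr.2]), ← mul_assoc]
    congr 1
    have h3 : -(x : ℂ) = (|x| : ℝ) := by rw [abs_of_neg h]; push_cast; rfl
    rw [h3]
    norm_cast
    calc _ = (β / |x| ^ β * |x| ^ (β - 1) * |x|) * (1 - r) ^ (β - 1) := by ring
      _ = _ := by rw [h2]
  · rw [cesaroR, if_pos h, ← integral_Ioc_eq_integral_Ioo,
      ← intervalIntegral.integral_of_le h.le]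
    have hs := intervalIntegral.smul_integral_comp_mul_right (a := 0) (b := 1)
      (fun s => (((x - s) ^ (β - 1) : ℝ) : ℂ) * f s) x
    rw [zero_mul, one_mul] at hs
    rw [← hs, Complex.real_smul, ← mul_assoc, ← intervalIntegral.integral_const_mul]
    refine intervalIntegral.integral_congr fun r hr => ?_
    rw [uIcc_of_le zero_le_one] at hr
    have h1 : x - r * x = x * (1 - r) := by ring
    have h2 := hc h
    rw [h1, Real.mul_rpow h.le (by linarith [hr.2]), ← mul_assoc]
    congr 1
    norm_cast
    calc _ = (β / x ^ β * x ^ (β - 1) * x) * (1 - r) ^ (β - 1) := by ring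
      _ = _ := by rw [h2]

lemma cesaroR_eq_integral_dilFun {p β : ℝ} (f : ℝ → ℂ) {x : ℝ} (hx : x ≠ 0) :
    cesaroR β f x = ∫ y, cesaroKernel p β y * dilFun p y f x := by
  have h1 : ∫ y, cesaroKernel p β y * dilFun p y f x =
      ∫ y in Ioi 0, cesaroKernel p β y * dilFun p y f x := by
    refine (setIntegral_eq_integral_of_forall_compl_eq_zero fun y hy => ?_).symm
    rw [cesaroKernel, indicator_of_notMem hy, zero_mul]
  rw [h1, cesaroR_eq_integral_Ioo f hx, integral_Ioo_eq_integral_exp_neg]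
  refine setIntegral_congr_fun measurableSet_Ioi fun y hy => ?_
  simp only [cesaroKernel, indicator_of_mem hy, dilFun]
  have h2 : Real.exp (y / p) * Real.exp (-y / p) = 1 := by
    rw [← Real.exp_add, neg_div, add_neg_cancel, Real.exp_zero]
  have h3 : (Real.exp (y / p) : ℂ) * (Real.exp (-y / p) : ℂ) = 1 := by exact_mod_cast h2
  simp only [Complex.ofReal_mul]
  linear_combination (-(Real.exp (-y) : ℂ) * β * (((1 - Real.exp (-y)) ^ (β - 1) : ℝ) : ℂ) *
    f (Real.exp (-y) * x)) * h3

/-- Elements of `L^p` are integrable over sets of finite measure, with a uniform bound. -/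
lemma exists_setIntegral_bound {p : ℝ} (hp : 1 < p) [Fact (1 ≤ ENNReal.ofReal p)] {A : Set ℝ}
    (hA : volume A < ⊤) : ∃ C : ℝ, ∀ f : Lp ℂ (ENNReal.ofReal p) (volume : Measure ℝ),
      IntegrableOn f A ∧ ∫ x in A, ‖f x‖ ≤ C * ‖f‖ := by
  have : IsFiniteMeasure (volume.restrict A) := ⟨by simpa using hA⟩
  have h1p : 1 ≤ ENNReal.ofReal p := Fact.out
  refine ⟨((volume.restrict A) univ ^ (1 / (1 : ENNReal).toReal -
    1 / (ENNReal.ofReal p).toReal)).toReal, fun f => ?_⟩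
  have hm : MemLp f (ENNReal.ofReal p) (volume.restrict A) := (Lp.memLp f).restrict A
  have hi : Integrable f (volume.restrict A) := memLp_one_iff_integrable.1 (hm.mono_exponent h1p)
  refine ⟨hi, ?_⟩
  have hb := eLpNorm_le_eLpNorm_mul_rpow_measure_univ h1p hm.1
  have hb' := hb.trans (mul_le_mul_left (eLpNorm_mono_measure f Measure.restrict_le_self) _)
  rw [integral_norm_eq_lintegral_enorm hi.1, ← eLpNorm_one_eq_lintegral_enorm, Lp.norm_def,
    mul_comm, ← ENNReal.toReal_mul]
  refine ENNReal.toReal_mono (ENNReal.mul_ne_top (Lp.eLpNorm_ne_top f) ?_) hb'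
  refine ENNReal.rpow_ne_top_of_nonneg ?_ (measure_ne_top _ _)
  rw [ENNReal.toReal_ofReal (by linarith), ENNReal.toReal_one, sub_nonneg, div_one,
    div_le_one (by linarith)]
  exact hp.le

/-- `T` is the Bochner integral of the normalised dilations against `cesaroKernel`. -/
lemma cesaro_eq_integral_dil {p : ℝ} (hp : 1 < p) {β : ℝ} (hβ : 0 < β)
    [Fact (1 ≤ ENNReal.ofReal p)]
    (T : Lp ℂ (ENNReal.ofReal p) (volume : Measure ℝ) →L[ℂ]
         Lp ℂ (ENNReal.ofReal p) (volume : Measure ℝ))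
    (hT : ∀ f : Lp ℂ (ENNReal.ofReal p) (volume : Measure ℝ),
      (T f : ℝ → ℂ) =ᵐ[(volume : Measure ℝ)] cesaroR β ⇑f)
    (f : Lp ℂ (ENNReal.ofReal p) (volume : Measure ℝ)) :
    T f = ∫ y, cesaroKernel p β y • dil hp y f := by
  have hp0 : 0 < p := by linarith
  have hk := integrable_cesaroKernel hp hβ
  refine Lp.ext (Lp.ae_eq_of_forall_setIntegral_eq _ _ (by simpa using hp0) ENNReal.ofReal_ne_top
    (fun A _ hA => ((exists_setIntegral_bound hp hA).choose_spec _).1)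
    (fun A _ hA => ((exists_setIntegral_bound hp hA).choose_spec _).1) fun A hAm hA => ?_)
  obtain ⟨C, hC⟩ := exists_setIntegral_bound hp hA
  -- integration over `A` as a continuous functional on `L^p`
  let ℓ : Lp ℂ (ENNReal.ofReal p) (volume : Measure ℝ) →L[ℂ] ℂ := LinearMap.mkContinuous
    { toFun := fun g => ∫ x in A, g x
      map_add' := fun g h => by
        rw [← integral_add (hC g).1 (hC h).1]
        exact integral_congr_ae (ae_restrict_of_ae (Lp.coeFn_add g h))
      map_smul' := fun c g => by
        rw [RingHom.id_apply, ← integral_smul]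
        exact integral_congr_ae (ae_restrict_of_ae (Lp.coeFn_smul c g)) } C
    (fun g => (norm_integral_le_integral_norm _).trans (hC g).2)
  have h1 : ∫ x in A, (∫ y, cesaroKernel p β y • dil hp y f : Lp ℂ (ENNReal.ofReal p) volume) x =
      ∫ y, cesaroKernel p β y * ∫ x in A, dilFun p y f x := by
    change ℓ (∫ y, cesaroKernel p β y • dil hp y f) = _
    rw [← ℓ.integral_comp_comm (integrable_smul_dil hp hk f)]
    refine integral_congr_ae (Eventually.of_forall fun y => ?_)
    simp only [map_smul, smul_eq_mul]
    congr 1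
    exact integral_congr_ae (ae_restrict_of_ae (coeFn_dil hp y f))
  have h2 : ∫ x in A, T f x = ∫ x in A, ∫ y, cesaroKernel p β y * dilFun p y f x := by
    refine integral_congr_ae (ae_restrict_of_ae ?_)
    filter_upwards [hT f, Measure.ae_ne volume (0 : ℝ)] with x hx hx0
    rw [hx, cesaroR_eq_integral_dilFun f hx0]
  rw [h1, h2]
  simp only [← integral_const_mul]
  have hfm : Measurable f := (Lp.stronglyMeasurable f).measurable
  have hkm := measurable_cesaroKernel p β
  have hmeas : Measurable (fun z : ℝ × ℝ => cesaroKernel p β z.2 * dilFun p z.2 f z.1) := by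
    unfold dilFun
    fun_prop
  have hdi : ∀ y, IntegrableOn (dilFun p y f) A ∧ ∫ x in A, ‖dilFun p y f x‖ ≤ C * ‖f‖ := by
    intro y
    have h3 := hC (dil hp y f)
    rw [LinearIsometry.norm_map] at h3
    have h4 := ae_restrict_of_ae (s := A) (coeFn_dil hp y f)
    refine ⟨h3.1.congr h4, le_trans (le_of_eq (integral_congr_ae ?_)) h3.2⟩
    filter_upwards [h4] with x hx
    rw [hx]
  refine integral_integral_swap ?_
  change Integrable (fun z : ℝ × ℝ => cesaroKernel p β z.2 * dilFun p z.2 f z.1) _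
  rw [integrable_prod_iff' hmeas.aestronglyMeasurable]
  refine ⟨Eventually.of_forall fun y => (hdi y).1.const_mul (cesaroKernel p β y), ?_⟩
  refine (hk.norm.mul_const (C * ‖f‖)).mono'
    hmeas.stronglyMeasurable.norm.integral_prod_left'.aestronglyMeasurable
    (Eventually.of_forall fun y => ?_)
  simp only [norm_mul]
  rw [integral_const_mul, norm_mul, norm_norm, Real.norm_of_nonneg
    (integral_nonneg fun _ => norm_nonneg _)]
  exact mul_le_mul_of_nonneg_left (hdi y).2 (norm_nonneg _)

/-! ### The spectrum -/

/-- The Riemann–Lebesgue lemma puts `0` in the closure of the values of the Fourier transform. -/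
lemma zero_mem_closure_fourierVal (k : ℝ → ℂ) : (0 : ℂ) ∈ closure (range (fourierVal k)) := by
  have h := Real.tendsto_integral_exp_smul_cocompact k
  refine mem_closure_of_tendsto h (Eventually.of_forall fun w => ⟨-(2 * Real.pi * w), ?_⟩)
  rw [fourierVal]
  refine integral_congr_ae (Eventually.of_forall fun y => ?_)
  simp only [Circle.smul_def, Real.fourierChar_apply, smul_eq_mul]
  rw [mul_comm]
  congr 2
  push_cast
  ring

/-- The spectrum of the generalized Cesàro operator `𝒞_β` on `L^p(ℝ,ℂ)` equals
`Γ(β+1) · closure { Γ(1-1/p+it)/Γ(β+1-1/p+it) : t ∈ ℝ }`. -/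
theorem cesaroR_spectrum
    (p : ℝ) (hp : 1 < p) (β : ℝ) (hβ : 0 < β)
    [Fact (1 ≤ ENNReal.ofReal p)]
    (T : Lp ℂ (ENNReal.ofReal p) (volume : Measure ℝ) →L[ℂ]
         Lp ℂ (ENNReal.ofReal p) (volume : Measure ℝ))
    (hT : ∀ f : Lp ℂ (ENNReal.ofReal p) (volume : Measure ℝ),
      (T f : ℝ → ℂ) =ᵐ[(volume : Measure ℝ)] cesaroR β ⇑f) :
    spectrum ℂ T =
      ((Real.Gamma (β + 1) : ℂ)) •
        closure {w : ℂ | ∃ t : ℝ,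
          w = Complex.Gamma (1 - 1 / (p : ℂ) + t * Complex.I) /
              Complex.Gamma ((β : ℂ) + 1 - 1 / (p : ℂ) + t * Complex.I)} := by
  have hk := integrable_cesaroKernel hp hβ
  have hrep := cesaro_eq_integral_dil hp hβ T hT
  have hset : (Real.Gamma (β + 1) : ℂ) • {w : ℂ | ∃ t : ℝ,
          w = Complex.Gamma (1 - 1 / (p : ℂ) + t * Complex.I) /
              Complex.Gamma ((β : ℂ) + 1 - 1 / (p : ℂ) + t * Complex.I)} =
      range (fourierVal (cesaroKernel p β)) := by
    ext z
    rw [mem_smul_set]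
    constructor
    · rintro ⟨w, ⟨t, rfl⟩, rfl⟩
      refine ⟨-t, ?_⟩
      rw [fourierVal_cesaroKernel hp hβ]
      simp [sub_neg_eq_add]
    · rintro ⟨t, rfl⟩
      refine ⟨_, ⟨-t, rfl⟩, ?_⟩
      rw [fourierVal_cesaroKernel hp hβ]
      simp [sub_eq_add_neg]
  rw [← closure_smul₀, hset]
  apply Subset.antisymm
  · intro z hz
    rcases spectrum_subset_fourierVal hk hrep hz with rfl | ⟨t, rfl⟩
    · exact zero_mem_closure_fourierVal _
    · exact subset_closure ⟨t, rfl⟩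
  · refine closure_minimal ?_ (spectrum.isClosed T)
    rintro _ ⟨t, rfl⟩
    obtain ⟨v, hv, hlim⟩ := exists_approx_eigenvectors hp t
    refine mem_spectrum_of_approx hk (fun y hy => ?_) hrep t v hv hlim
    exact indicator_of_notMem (fun h => lt_asymm hy h) _
end

section
/- Let β > 0 and let f ∈ L^1(ℝ, ℂ). Then 𝒞_β^* f ∈ L^1(ℝ, ℂ), and its Fourier transform satisfies, for almost every t ∈ ℝ, 𝓕(𝒞_β^* f)(t) = 𝒞_β(𝓕 f)(t) = β∫₀^1 (1−r)^{β-1} (𝓕 f)(tr) dr; that is, the Fourier transform intertwines the companion Cesàro operator 𝒞_β^* with the Cesàro operator 𝒞_β. -/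
/-!
Both operators are averages over dilations. The substitution `s = t / r` turns the companion
operator into `𝒞_β^* f(t) = β ∫₀¹ (1-r)^(β-1) r⁻¹ f(t/r) dr` for `t ≠ 0`
(`cesaroStarR_eq_integral_dilation`), and `s = t r` turns `𝒞_β g(t)` into
`β ∫₀¹ (1-r)^(β-1) g(t r) dr` (`cesaroR_eq_integral_dilation`).

The dilation `f ↦ r⁻¹ f(·/r)` preserves the `L¹` norm, and `(1-r)^(β-1)` is integrable on `(0,1)`
because `β > 0`; hence `(t, r) ↦ (1-r)^(β-1) r⁻¹ f(t/r)` is integrable on `ℝ × (0,1)`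
(`integrable_dilationKernel`). Fubini then gives the integrability of `𝒞_β^* f` and lets the Fourier
transform pass under the `r`-integral, where it sends `r⁻¹ f(·/r)` to `𝓕f(r ·)` (`ft_dilation`).

Joint measurability of the kernel is obtained by first replacing `f` with a strongly measurable
representative, which alters neither `𝒞_β^* f` nor `𝓕f` at any point.
-/

open MeasureTheory Set

/-- The companion generalized Cesàro operator on the real line:
`𝒞_β^* f(t) = β ∫_{-∞}^t ((t-s)^(β-1)/|s|^β) f(s) ds` for `t < 0` and
`𝒞_β^* f(t) = β ∫ₜ^∞ ((s-t)^(β-1)/s^β) f(s) ds` for `t > 0`. -/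
noncomputable def cesaroStarR (β : ℝ) (f : ℝ → ℂ) (t : ℝ) : ℂ :=
  if 0 < t then
    (β : ℂ) * ∫ s in Ioi t, (((s - t) ^ (β - 1) / s ^ β : ℝ) : ℂ) * f s
  else if t < 0 then
    (β : ℂ) * ∫ s in Iio t, (((t - s) ^ (β - 1) / |s| ^ β : ℝ) : ℂ) * f s
  else 0

/-- The Fourier transform `𝓕f(t) = ∫ e^{-ixt} f(x) dx`. -/
noncomputable def ft (f : ℝ → ℂ) (t : ℝ) : ℂ :=
  ∫ x : ℝ, Complex.exp (-(x * t) * Complex.I) * f x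

/-- The Jacobian `a / r ^ 2` of `r ↦ a / r` times the kernel of `𝒞_β^*` at `s = a / r` no longer
depends on `a`. -/
lemma cesaro_kernel_substitution (β : ℝ) {a r : ℝ} (ha : 0 < a) (hr : r ∈ Ioo (0 : ℝ) 1) :
    a / r ^ 2 * ((a / r - a) ^ (β - 1) / (a / r) ^ β) = (1 - r) ^ (β - 1) * r⁻¹ := by
  obtain ⟨h0, h1⟩ := hr
  have hq : 0 < a / r := div_pos ha h0
  have hpow : (a / r) ^ β ≠ 0 := (Real.rpow_pos_of_pos hq β).ne'
  have e : a / r - a = a / r * (1 - r) := by field_simp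
  rw [e, Real.mul_rpow hq.le (by linarith), Real.rpow_sub_one hq.ne']
  generalize (a / r) ^ β = p at hpow
  field_simp

/-- The integrand of the dilation form of `𝒞_β^* f`. -/
noncomputable def dilationKernel (β : ℝ) (f : ℝ → ℂ) (t r : ℝ) : ℂ :=
  (((1 - r) ^ (β - 1) * r⁻¹ : ℝ) : ℂ) * f (t / r)

lemma hasDerivWithinAt_const_div (t : ℝ) {r : ℝ} (hr : r ∈ Ioo (0 : ℝ) 1) :
    HasDerivWithinAt (fun r : ℝ => t / r) (-t / r ^ 2) (Ioo 0 1) r := by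
  have h := ((hasDerivAt_inv hr.1.ne').const_mul t).hasDerivWithinAt (s := Ioo (0 : ℝ) 1)
  have e : -t / r ^ 2 = t * -(r ^ 2)⁻¹ := by ring
  rw [e]
  exact h

lemma injOn_const_div {t : ℝ} (ht : t ≠ 0) : InjOn (fun r : ℝ => t / r) (Ioo 0 1) := by
  intro x hx y hy h
  have hx0 := hx.1.ne'
  have hy0 := hy.1.ne'
  simp only at h
  field_simp at h
  exact h.symm

lemma image_const_div_pos {t : ℝ} (ht : 0 < t) : (fun r : ℝ => t / r) '' Ioo 0 1 = Ioi t := by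
  ext s
  constructor
  · rintro ⟨r, ⟨h0, h1⟩, rfl⟩
    simp only [mem_Ioi]
    rw [lt_div_iff₀ h0]
    nlinarith
  · intro hs
    have hs' : t < s := hs
    have hs0 : 0 < s := ht.trans hs'
    refine ⟨t / s, ⟨by positivity, (div_lt_one hs0).2 hs'⟩, ?_⟩
    simp only
    field_simp

lemma image_const_div_neg {t : ℝ} (ht : t < 0) : (fun r : ℝ => t / r) '' Ioo 0 1 = Iio t := by
  ext s
  constructor
  · rintro ⟨r, ⟨h0, h1⟩, rfl⟩
    simp only [mem_Iio]
    rw [div_lt_iff₀ h0]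
    nlinarith
  · intro hs
    have hs' : s < t := hs
    have hs0 : s < 0 := hs'.trans ht
    refine ⟨t / s, ⟨div_pos_of_neg_of_neg ht hs0, (div_lt_one_of_neg hs0).2 hs'⟩, ?_⟩
    have := ht.ne
    have := hs0.ne
    simp only
    field_simp

lemma cesaroStarR_eq_integral_dilation (β : ℝ) (f : ℝ → ℂ) {t : ℝ} (ht : t ≠ 0) :
    cesaroStarR β f t = (β : ℂ) * ∫ r in Ioo (0 : ℝ) 1, dilationKernel β f t r := by
  unfold cesaroStarR
  rcases ht.lt_or_gt with h | h
  · rw [if_neg h.not_gt, if_pos h, ← image_const_div_neg h,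
      integral_image_eq_integral_abs_deriv_smul measurableSet_Ioo
        (fun r hr => hasDerivWithinAt_const_div t hr) (injOn_const_div ht)]
    congr 1
    refine setIntegral_congr_fun measurableSet_Ioo fun r hr => ?_
    have hr0 := hr.1
    have k := cesaro_kernel_substitution β (neg_pos.2 h) hr
    have e1 : |-t / r ^ 2| = -t / r ^ 2 :=
      abs_of_pos (div_pos (neg_pos.2 h) (by positivity))
    have e2 : |t / r| = -t / r := by
      rw [abs_of_neg (div_neg_of_neg_of_pos h hr0), neg_div]
    have e3 : t - t / r = -t / r - -t := by ring
    simp only [dilationKernel]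
    rw [← k, e1, e2, e3, Complex.real_smul, ← mul_assoc, ← Complex.ofReal_mul]
  · rw [if_pos h, ← image_const_div_pos h,
      integral_image_eq_integral_abs_deriv_smul measurableSet_Ioo
        (fun r hr => hasDerivWithinAt_const_div t hr) (injOn_const_div ht)]
    congr 1
    refine setIntegral_congr_fun measurableSet_Ioo fun r hr => ?_
    have hr0 := hr.1
    have k := cesaro_kernel_substitution β h hr
    have e1 : |-t / r ^ 2| = t / r ^ 2 := by
      rw [neg_div, abs_neg, abs_of_pos (by positivity)]
    simp only [dilationKernel]
    rw [← k, e1, Complex.real_smul, ← mul_assoc, ← Complex.ofReal_mul]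

lemma cesaroR_eq_integral_dilation (β : ℝ) (g : ℝ → ℂ) {t : ℝ} (ht : t ≠ 0) :
    cesaroR β g t =
      (β : ℂ) * ∫ r in Ioo (0 : ℝ) 1, (((1 - r) ^ (β - 1) : ℝ) : ℂ) * g (t * r) := by
  have hd : ∀ r ∈ Ioo (0 : ℝ) 1, HasDerivWithinAt (fun r : ℝ => t * r) t (Ioo 0 1) r := by
    intro r _
    simpa using ((hasDerivAt_id r).const_mul t).hasDerivWithinAt (s := Ioo (0 : ℝ) 1)
  have hinj : InjOn (fun r : ℝ => t * r) (Ioo 0 1) := fun x _ y _ h => mul_left_cancel₀ ht h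
  -- The factor `β / a ^ β` in front absorbs the Jacobian `a` and the dilated weight.
  have key : ∀ a : ℝ, 0 < a → ∀ r ∈ Ioo (0 : ℝ) 1,
      β / a ^ β * (a * (a * (1 - r)) ^ (β - 1)) = β * (1 - r) ^ (β - 1) := by
    intro a ha r hr
    have hpow : a ^ β ≠ 0 := (Real.rpow_pos_of_pos ha β).ne'
    rw [Real.mul_rpow ha.le (by linarith [hr.2]), Real.rpow_sub_one ha.ne']
    field_simp
  unfold cesaroR
  rcases ht.lt_or_gt with h | h
  · have him : (fun r : ℝ => t * r) '' Ioo 0 1 = Ioo t 0 := by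
      ext s
      constructor
      · rintro ⟨r, ⟨h0, h1⟩, rfl⟩
        constructor <;> simp only <;> nlinarith
      · rintro ⟨h1, h0⟩
        refine ⟨s / t, ⟨div_pos_of_neg_of_neg h0 h, (div_lt_one_of_neg h).2 h1⟩, ?_⟩
        simp only
        field_simp
    rw [if_neg h.not_gt, if_pos h, ← him,
      integral_image_eq_integral_abs_deriv_smul measurableSet_Ioo hd hinj,
      ← integral_const_mul, ← integral_const_mul]
    refine setIntegral_congr_fun measurableSet_Ioo fun r hr => ?_
    have k := key |t| (abs_pos.2 ht) r hr
    have e : t * r - t = |t| * (1 - r) := by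
      rw [abs_of_neg h]
      ring
    rw [e, Complex.real_smul, ← mul_assoc, ← mul_assoc, ← mul_assoc, ← Complex.ofReal_mul,
      ← Complex.ofReal_mul, ← Complex.ofReal_mul, mul_assoc, k]
  · have him : (fun r : ℝ => t * r) '' Ioo 0 1 = Ioo 0 t := by
      rw [image_mul_left_Ioo h]
      simp
    rw [if_pos h, ← him,
      integral_image_eq_integral_abs_deriv_smul measurableSet_Ioo hd hinj,
      ← integral_const_mul, ← integral_const_mul]
    refine setIntegral_congr_fun measurableSet_Ioo fun r hr => ?_
    have k := key t h r hr
    have e : t - t * r = t * (1 - r) := by ring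
    rw [e, abs_of_pos h, Complex.real_smul, ← mul_assoc, ← mul_assoc, ← mul_assoc,
      ← Complex.ofReal_mul, ← Complex.ofReal_mul, ← Complex.ofReal_mul, mul_assoc, k]

lemma integrableOn_one_sub_rpow {β : ℝ} (hβ : 0 < β) :
    IntegrableOn (fun r : ℝ => (1 - r) ^ (β - 1)) (Ioo 0 1) := by
  have h := (intervalIntegral.intervalIntegrable_rpow' (a := 0) (b := 1)
    (show -1 < β - 1 by linarith)).comp_sub_left 1
  simp only [sub_zero, sub_self] at h
  exact ((intervalIntegrable_iff_integrableOn_Ioo_of_le zero_le_one).1 h.symm)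

/-- Since each dilation `f ↦ r⁻¹ f(·/r)` is an `L¹` isometry, the `t`-integral of the norm of the
kernel is `(1-r)^(β-1) ‖f‖₁`, which is integrable in `r`. -/
lemma integrable_dilationKernel {β : ℝ} (hβ : 0 < β) {f : ℝ → ℂ} (hf : Integrable f)
    (hm : StronglyMeasurable f) :
    Integrable (Function.uncurry (dilationKernel β f))
      ((volume : Measure ℝ).prod (volume.restrict (Ioo (0 : ℝ) 1))) := by
  have hmeas : Measurable (Function.uncurry (dilationKernel β f)) := by
    have := hm.measurable
    unfold dilationKernel Function.uncurry
    fun_prop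
  rw [integrable_prod_iff' hmeas.aestronglyMeasurable]
  constructor
  · filter_upwards [ae_restrict_mem measurableSet_Ioo] with r hr
    exact (hf.comp_div hr.1.ne').const_mul (((1 - r) ^ (β - 1) * r⁻¹ : ℝ) : ℂ)
  · refine (integrable_congr ?_).1 ((integrableOn_one_sub_rpow hβ).mul_const (∫ y, ‖f y‖))
    filter_upwards [ae_restrict_mem measurableSet_Ioo] with r hr
    have hr0 := hr.1
    have hw : 0 ≤ (1 - r) ^ (β - 1) := Real.rpow_nonneg (by linarith [hr.2]) _
    simp only [Function.uncurry, dilationKernel, norm_mul, Complex.norm_real, Real.norm_eq_abs,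
      abs_inv, abs_of_nonneg hw, abs_of_pos hr0]
    rw [integral_const_mul, Measure.integral_comp_div (fun y => ‖f y‖) r, abs_of_pos hr0,
      smul_eq_mul]
    field_simp

/-- The Fourier transform turns the `L¹`-normalised dilation `r⁻¹ f(·/r)` into `𝓕f(r ·)`. -/
lemma ft_dilation (β : ℝ) (f : ℝ → ℂ) (t : ℝ) {r : ℝ} (hr : 0 < r) :
    ∫ x : ℝ, Complex.exp (-(x * t) * Complex.I) * dilationKernel β f x r =
      (((1 - r) ^ (β - 1) : ℝ) : ℂ) * ft f (t * r) := by
  have hrc : (r : ℂ) ≠ 0 := Complex.ofReal_ne_zero.2 hr.ne'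
  have h := Measure.integral_comp_div
    (fun y : ℝ => Complex.exp (-(y * (t * r : ℝ)) * Complex.I) * f y) r
  have e : ∀ x : ℝ, Complex.exp (-(x * t) * Complex.I) * dilationKernel β f x r =
      (((1 - r) ^ (β - 1) * r⁻¹ : ℝ) : ℂ) *
        (Complex.exp (-((x / r : ℝ) * (t * r : ℝ)) * Complex.I) * f (x / r)) := by
    intro x
    have e' : ((x / r : ℝ) : ℂ) * (t * r : ℝ) = x * t := by
      push_cast
      field_simp
    rw [e', dilationKernel]
    ring
  simp_rw [e]
  rw [integral_const_mul, h, abs_of_pos hr, ft, Complex.real_smul, ← mul_assoc, ← Complex.ofReal_mul,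
    inv_mul_cancel_right₀ hr.ne']

lemma cesaroStarR_congr_ae (β : ℝ) {f g : ℝ → ℂ} (h : f =ᵐ[volume] g) :
    cesaroStarR β f = cesaroStarR β g := by
  have hI : ∀ (S : Set ℝ) (k : ℝ → ℂ), ∫ s in S, k s * f s = ∫ s in S, k s * g s := by
    intro S k
    refine integral_congr_ae ?_
    filter_upwards [ae_restrict_of_ae h] with s hs
    rw [hs]
  funext t
  unfold cesaroStarR
  rw [hI (Ioi t) (fun s => (((s - t) ^ (β - 1) / s ^ β : ℝ) : ℂ)),
    hI (Iio t) (fun s => (((t - s) ^ (β - 1) / |s| ^ β : ℝ) : ℂ))]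

lemma ft_congr_ae {f g : ℝ → ℂ} (h : f =ᵐ[volume] g) : ft f = ft g := by
  funext t
  refine integral_congr_ae ?_
  filter_upwards [h] with s hs
  rw [hs]

lemma cesaroStarR_ae_eq (β : ℝ) (f : ℝ → ℂ) :
    cesaroStarR β f =ᵐ[volume]
      fun t => (β : ℂ) * ∫ r in Ioo (0 : ℝ) 1, dilationKernel β f t r := by
  filter_upwards [compl_mem_ae_iff.2 (measure_singleton (0 : ℝ))] with t ht
  exact cesaroStarR_eq_integral_dilation β f ht

lemma integrable_cesaroStarR {β : ℝ} (hβ : 0 < β) {f : ℝ → ℂ} (hf : Integrable f)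
    (hm : StronglyMeasurable f) : Integrable (cesaroStarR β f) :=
  ((integrable_dilationKernel hβ hf hm).integral_prod_left.const_mul (β : ℂ)).congr
    (cesaroStarR_ae_eq β f).symm

lemma ft_cesaroStarR {β : ℝ} (hβ : 0 < β) {f : ℝ → ℂ} (hf : Integrable f)
    (hm : StronglyMeasurable f) (t : ℝ) :
    ft (cesaroStarR β f) t =
      (β : ℂ) * ∫ r in Ioo (0 : ℝ) 1, (((1 - r) ^ (β - 1) : ℝ) : ℂ) * ft f (t * r) := by
  have hint : Integrable (Function.uncurry fun x r : ℝ =>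
      Complex.exp (-(x * t) * Complex.I) * dilationKernel β f x r)
      ((volume : Measure ℝ).prod (volume.restrict (Ioo (0 : ℝ) 1))) := by
    refine (integrable_dilationKernel hβ hf hm).bdd_mul (c := 1)
      (f := fun p : ℝ × ℝ => Complex.exp (-(p.1 * t) * Complex.I)) ?_ ?_
    · exact Continuous.aestronglyMeasurable (by fun_prop)
    · refine Filter.Eventually.of_forall fun p => ?_
      have e : -((p.1 : ℂ) * t) * Complex.I = ((-(p.1 * t) : ℝ) : ℂ) * Complex.I := by
        push_cast
        ring
      rw [e, Complex.norm_exp_ofReal_mul_I]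
  rw [ft_congr_ae (cesaroStarR_ae_eq β f), ft]
  simp_rw [mul_left_comm _ (β : ℂ), ← integral_const_mul (μ := volume.restrict (Ioo (0 : ℝ) 1))
    (Complex.exp _)]
  rw [integral_const_mul, integral_integral_swap hint]
  congr 1
  exact setIntegral_congr_fun measurableSet_Ioo fun r hr => ft_dilation β f t hr.1

/-- For `f ∈ L¹(ℝ,ℂ)`, `𝒞_β^* f ∈ L¹(ℝ,ℂ)` and the Fourier transform intertwines
`𝒞_β^*` with `𝒞_β`:  `𝓕(𝒞_β^* f)(t) = 𝒞_β(𝓕 f)(t) = β ∫₀¹ (1-r)^{β-1} 𝓕f(tr) dr`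
for almost every `t`. -/
theorem fourier_intertwines_cesaroStar
    (β : ℝ) (hβ : 0 < β) (f : ℝ → ℂ) (hf : Integrable f (volume : Measure ℝ)) :
    Integrable (cesaroStarR β f) (volume : Measure ℝ) ∧
    (∀ᵐ t ∂(volume : Measure ℝ),
      ft (cesaroStarR β f) t =
        (β : ℂ) * ∫ r in Ioo (0 : ℝ) 1, (((1 - r) ^ (β - 1) : ℝ) : ℂ) * ft f (t * r) ∧
      cesaroR β (ft f) t =
        (β : ℂ) * ∫ r in Ioo (0 : ℝ) 1, (((1 - r) ^ (β - 1) : ℝ) : ℂ) * ft f (t * r)) := by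
  -- A strongly measurable representative has the same images under `𝒞_β^*` and `𝓕`.
  have hae := hf.aestronglyMeasurable.ae_eq_mk
  have hm := hf.aestronglyMeasurable.stronglyMeasurable_mk
  have hg := hf.congr hae
  rw [cesaroStarR_congr_ae β hae, ft_congr_ae hae]
  refine ⟨integrable_cesaroStarR hβ hg hm, ?_⟩
  filter_upwards [compl_mem_ae_iff.2 (measure_singleton (0 : ℝ))] with t ht
  exact ⟨ft_cesaroStarR hβ hg hm t, cesaroR_eq_integral_dilation β _ ht⟩
end
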